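/- arXiv:2103.02321 — 5 statements merged into one kernel-verified Lean document; each statement's English description precedes it below -/
import Mathlib

section
/- Let u be a linear functional on ℂ[x] with u_0 ≠ 0, let P be a polynomial, let c ∈ ℂ, and let Q be the polynomial obtained by applying u to the second variable of the divided difference of P, i.e. Q(x) = (1/u_0)·⟨u_y, (P(x) − P(y))/(x − y)⟩. Then Q′(c) = (1/u_0)·⟨u, q⟩, where q is the unique polynomial with P(x) = P(c) + P′(c)(x−c) + (x−c)²·q(x); in other words Q′(c) = (1/u_0)·⟨(x−c)^{-2}u, P⟩. In particular, if (P_n) is the SMOP of u and P^{(1)}_{n−1}(x) = (1/u_0)⟨u_y, (P_n(x) − P_n(y))/(x − y)⟩ is the (n−1)-st associated polynomial of the first kind, then (P^{(1)}_{n−1})′(c) = (1/u_0)·⟨(x−c)^{-2}u, P_n⟩ for all n ≥ 1. -/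
open Polynomial

noncomputable section

/-- Apply a linear functional (identified with its moment sequence) to a polynomial:
`⟨u, p⟩ = Σ_k c_k u_k` for `p = Σ_k c_k x^k`. -/
def fapply (u : ℕ → ℂ) (p : Polynomial ℂ) : ℂ := p.sum fun k ck => ck * u k

/-- `P` is the sequence of monic orthogonal polynomials (SMOP) of the functional `u`. -/
def IsSMOP (u : ℕ → ℂ) (P : ℕ → Polynomial ℂ) : Prop :=
  (∀ n, (P n).Monic) ∧ (∀ n, (P n).natDegree = n) ∧
    (∀ n m, n ≠ m → fapply u (P n * P m) = 0) ∧ (∀ n, fapply u (P n * P n) ≠ 0)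

/-- A functional is quasi-definite iff it admits a SMOP. -/
def IsQuasiDefinite (u : ℕ → ℂ) : Prop := ∃ P, IsSMOP u P

/-- Three term recurrence relation `x P_n = P_{n+1} + b_n P_n + a_n P_{n-1}`,
with `P_{-1} = 0`, `P_0 = 1`. -/
def HasTTRR (P : ℕ → Polynomial ℂ) (a b : ℕ → ℂ) : Prop :=
  P 0 = 1 ∧ X * P 0 = P 1 + C (b 0) * P 0 ∧
    ∀ n, 1 ≤ n → X * P n = P (n + 1) + C (b n) * P n + C (a n) * P (n - 1)

/-- Wronskian `W(p,q)(x) = p(x) q'(x) - p'(x) q(x)`. -/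
def Wr (p q : Polynomial ℂ) (x : ℂ) : ℂ :=
  p.eval x * (derivative q).eval x - (derivative p).eval x * q.eval x

/-- The monic Jacobi matrix with diagonal `b`, superdiagonal `1` and subdiagonal
entries `J_{n+1,n} = a_{n+1}`. -/
def jacobi (a b : ℕ → ℂ) (i j : ℕ) : ℂ :=
  if i = j then b i else if j = i + 1 then 1 else if i = j + 1 then a i else 0

/-- Entrywise product of semi-infinite (banded) matrices; the sum has finite support. -/
def mprod (A B : ℕ → ℕ → ℂ) (i j : ℕ) : ℂ := ∑' k, A i k * B k j

/-- `w` is the moment sequence of the inverse functional `u⁻¹`: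
the convolution of the moments of `u` and `w` is `(1,0,0,…)`. -/
def IsInverseMoments (u w : ℕ → ℂ) : Prop :=
  ∀ n, ∑ k ∈ Finset.range (n + 1), u k * w (n - k) = if n = 0 then 1 else 0

/-- Apply a functional `u` to the second (outer) variable `y` of a bivariate polynomial
`D = Σ_k q_k(x) y^k`, giving `Σ_k u_k q_k(x)`. -/
def fapplyY (u : ℕ → ℂ) (D : Polynomial (Polynomial ℂ)) : Polynomial ℂ :=
  D.sum fun k q => u k • q

theorem aux_main (u : ℕ → ℂ) (c : ℂ) (p : Polynomial ℂ) (D : Polynomial (Polynomial ℂ))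
    (q : Polynomial ℂ)
    (hD : (Polynomial.C Polynomial.X - Polynomial.X) * D
            = Polynomial.C p - p.map Polynomial.C)
    (hq : p = C (p.eval c) + C ((derivative p).eval c) * (X - C c) + (X - C c) ^ 2 * q) :
    (derivative (fapplyY u D)).eval c = fapply u q := by
  obtain ⟨E, hE⟩ : ∃ E : Polynomial ℂ, ∀ k, E.coeff k = (derivative (D.coeff k)).eval c := by
    refine ⟨∑ k ∈ D.support, C ((derivative (D.coeff k)).eval c) * X ^ k, fun k => ?_⟩
    simp only [finset_sum_coeff, coeff_C_mul_X_pow]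
    rw [Finset.sum_ite_eq]
    split_ifs with h
    · rfl
    · rw [notMem_support_iff.mp h]; simp
  have hA : ∀ k, (D.map (evalRingHom c)).coeff k = (D.coeff k).eval c := by
    intro k; simp [coeff_map]
  have h0 : X * D.coeff 0 = p - C (p.coeff 0) := by
    have := congrArg (fun r => Polynomial.coeff r 0) hD
    simpa [sub_mul] using this
  have hs : ∀ k, X * D.coeff (k+1) - D.coeff k = - C (p.coeff (k+1)) := by
    intro k
    have := congrArg (fun r => Polynomial.coeff r (k+1)) hD
    simpa [sub_mul, coeff_C] using this
  have e1 : (C c - X) * D.map (evalRingHom c) = C (p.eval c) - p := by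
    ext k
    rcases k with _ | k
    · have := congrArg (Polynomial.eval c) h0
      simpa [sub_mul, hA] using this
    · have := congrArg (Polynomial.eval c) (hs k)
      simpa [sub_mul, hA, coeff_C] using this
  have e2 : D.map (evalRingHom c) + (C c - X) * E = C ((derivative p).eval c) := by
    ext k
    rcases k with _ | k
    · have := congrArg (fun r => Polynomial.eval c (derivative r)) h0
      simpa [sub_mul, hA, hE] using this
    · have := congrArg (fun r => Polynomial.eval c (derivative r)) (hs k)
      simp [sub_mul, hA, hE, coeff_C] at this ⊢
      linear_combination this
  have hEq : E = q := by
    have hne : (X - C c : Polynomial ℂ) ^ 2 ≠ 0 := pow_ne_zero _ (X_sub_C_ne_zero c)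
    apply mul_left_cancel₀ hne
    linear_combination hq - e1 + (C c - X) * e2
  subst hEq
  have hsub : E.support ⊆ D.support := by
    intro k hk
    rw [mem_support_iff] at hk ⊢
    intro h
    apply hk
    rw [hE, h]; simp
  unfold fapply fapplyY
  rw [Polynomial.sum_def, Polynomial.sum_def, Finset.sum_subset hsub]
  · simp [eval_finset_sum, hE, mul_comm]
  · intro k _ hk
    rw [notMem_support_iff.mp hk, zero_mul]

/-- for a functional `u` with `u_0 ≠ 0`, if
`Q(x) = (1/u_0)⟨u_y, (P(x)-P(y))/(x-y)⟩` then `Q'(c) = (1/u_0)⟨(x-c)⁻²u, P⟩`; in particular,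
for the first-kind associated polynomials of the SMOP of `u`,
`(P^{(1)}_{n-1})'(c) = (1/u_0)⟨(x-c)⁻²u, P_n⟩` for all `n ≥ 1`.
Here the divided difference `(P(x)-P(y))/(x-y)` is encoded as the (unique) bivariate
polynomial `D` (in the outer variable `y`, with coefficients in `ℂ[x]`) satisfying
`(x - y) D = P(x) - P(y)`, and `(x-c)⁻²u` applied to `P` is `⟨u, q⟩` where `q` is the
unique polynomial with `P = P(c) + P'(c)(x-c) + (x-c)² q`. -/
theorem stmt_1 (u : ℕ → ℂ) (hu0 : u 0 ≠ 0) (c : ℂ)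
    (P : ℕ → Polynomial ℂ) (hP : IsSMOP u P)
    (D : ℕ → Polynomial (Polynomial ℂ))
    (hD : ∀ n, 1 ≤ n →
      (Polynomial.C Polynomial.X - Polynomial.X) * D n
        = Polynomial.C (P n) - (P n).map Polynomial.C)
    (q : ℕ → Polynomial ℂ)
    (hq : ∀ n, 1 ≤ n →
      P n = C ((P n).eval c) + C ((derivative (P n)).eval c) * (X - C c)
        + (X - C c) ^ 2 * q n) :
    (∀ (p : Polynomial ℂ) (Dp : Polynomial (Polynomial ℂ)) (qp : Polynomial ℂ),
        (Polynomial.C Polynomial.X - Polynomial.X) * Dp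
            = Polynomial.C p - p.map Polynomial.C →
        p = C (p.eval c) + C ((derivative p).eval c) * (X - C c) + (X - C c) ^ 2 * qp →
        (derivative ((u 0)⁻¹ • fapplyY u Dp)).eval c = (u 0)⁻¹ * fapply u qp)
    ∧ (∀ n, 1 ≤ n →
        (derivative ((u 0)⁻¹ • fapplyY u (D n))).eval c = (u 0)⁻¹ * fapply u (q n)) := by
  have key : ∀ (p : Polynomial ℂ) (Dp : Polynomial (Polynomial ℂ)) (qp : Polynomial ℂ),
        (Polynomial.C Polynomial.X - Polynomial.X) * Dp
            = Polynomial.C p - p.map Polynomial.C →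
        p = C (p.eval c) + C ((derivative p).eval c) * (X - C c) + (X - C c) ^ 2 * qp →
        (derivative ((u 0)⁻¹ • fapplyY u Dp)).eval c = (u 0)⁻¹ * fapply u qp := by
    intro p Dp qp h1 h2
    rw [derivative_smul, eval_smul, aux_main u c p Dp qp h1 h2, smul_eq_mul]
  exact ⟨key, fun n hn => key _ _ _ (hD n hn) (hq n hn)⟩
end
end

section
/- Let u be a quasi-definite linear functional on ℂ[x] with SMOP (P_n)_{n≥0} and associated polynomials of the first kind (P^{(1)}_n)_{n≥0}, let c ∈ ℂ, and let û be a linear functional with u = (x−c)²û (so the moments û_0, û_1 are free parameters). Set S_n(x) = (û_1 − c·û_0)·P_n(x) + u_0·P^{(1)}_{n−1}(x) and, for n ≥ 2, d_n* = S_{n−2}(c)·(S′_{n−1}(c) + û_0·P_{n−1}(c)) − S_{n−1}(c)·(S′_{n−2}(c) + û_0·P_{n−2}(c)). Then û is quasi-definite if and only if û_0 ≠ 0 and d_n* ≠ 0 for all n ≥ 2; moreover, in that case the SMOP (Q_n)_{n≥0} of û is given by Q_0 = 1, Q_1(x) = x − û_1/û_0, and for n ≥ 2, Q_n(x) = (1/d_n*)·det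 of the 3×3 matrix with first row (P_n(x), P_{n−1}(x), P_{n−2}(x)), second row (S′_n(c)+û_0 P_n(c), S′_{n−1}(c)+û_0 P_{n−1}(c), S′_{n−2}(c)+û_0 P_{n−2}(c)), and third row (S_n(c), S_{n−1}(c), S_{n−2}(c)). -/
open Polynomial

noncomputable section

/-- `S_n(x) = (û_1 - c û_0) P_n(x) + u_0 P^{(1)}_{n-1}(x)` (with `P^{(1)}_{-1} = 0`). -/
def Spoly (u uh : ℕ → ℂ) (c : ℂ) (P P1 : ℕ → Polynomial ℂ) (n : ℕ) : Polynomial ℂ :=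
  C (uh 1 - c * uh 0) * P n + C (u 0) * (if n = 0 then 0 else P1 (n - 1))

/-- The entries `S'_n(c) + û_0 P_n(c)` of the second row. -/
def row2 (u uh : ℕ → ℂ) (c : ℂ) (P P1 : ℕ → Polynomial ℂ) (n : ℕ) : ℂ :=
  (derivative (Spoly u uh c P P1 n)).eval c + uh 0 * (P n).eval c

/-- `d_n* = S_{n-2}(c)(S'_{n-1}(c)+û_0 P_{n-1}(c)) - S_{n-1}(c)(S'_{n-2}(c)+û_0 P_{n-2}(c))`. -/
def dstar (u uh : ℕ → ℂ) (c : ℂ) (P P1 : ℕ → Polynomial ℂ) (n : ℕ) : ℂ :=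
  (Spoly u uh c P P1 (n - 2)).eval c * row2 u uh c P P1 (n - 1)
    - (Spoly u uh c P P1 (n - 1)).eval c * row2 u uh c P P1 (n - 2)

def Lf (v : ℕ → ℂ) : ℂ[X] →ₗ[ℂ] ℂ := Polynomial.lsum (fun k => (v k) • LinearMap.id)

lemma fapply_eq (v : ℕ → ℂ) (p : ℂ[X]) : fapply v p = Lf v p := by
  simp [fapply, Lf, Polynomial.lsum_apply, mul_comm]

lemma Lf_C_mul (v : ℕ → ℂ) (a : ℂ) (p : ℂ[X]) : Lf v (C a * p) = a * Lf v p := by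
  rw [← smul_eq_C_mul, map_smul, smul_eq_mul]

lemma Lf_X_pow (v : ℕ → ℂ) (n : ℕ) : Lf v (X ^ n) = v n := by
  rw [← fapply_eq, fapply, ← monomial_one_right_eq_X_pow, sum_monomial_index] <;> simp

lemma Lf_one (v : ℕ → ℂ) : Lf v 1 = v 0 := by simpa using Lf_X_pow v 0
lemma Lf_X (v : ℕ → ℂ) : Lf v X = v 1 := by simpa using Lf_X_pow v 1

lemma Lf_rel {u uh : ℕ → ℂ} {c : ℂ}
    (hrel : ∀ n, u n = uh (n + 2) - 2 * c * uh (n + 1) + c ^ 2 * uh n) (p : ℂ[X]) :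
    Lf uh ((X - C c) ^ 2 * p) = Lf u p := by
  induction p using Polynomial.induction_on' with
  | add p q hp hq => rw [mul_add, map_add, map_add, hp, hq]
  | monomial n a =>
    have : (X - C c) ^ 2 * (C a * X ^ n : ℂ[X])
        = C a * X ^ (n + 2) - C (a * (2 * c)) * X ^ (n + 1) + C (a * c ^ 2) * X ^ n := by
      simp only [C_mul, C_pow, C_ofNat]; ring
    rw [← C_mul_X_pow_eq_monomial, this]
    simp only [map_add, map_sub, Lf_C_mul, Lf_X_pow, hrel]
    ring

lemma degree_sub_lt_aux {p q : ℂ[X]} {n : ℕ} (hq : q.Monic) (hn : q.natDegree = n)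
    (hp : p.degree < (n + 1 : ℕ)) : (p - C (p.coeff n) * q).degree < n := by
  rw [degree_lt_iff_coeff_zero] at hp ⊢
  intro m hm
  rcases hm.eq_or_lt with rfl | hm
  · have : q.coeff n = 1 := by rw [← hn]; exact hq
    simp [this]
  · rw [coeff_sub, coeff_C_mul, hp m hm, coeff_eq_zero_of_natDegree_lt (p := q) (by omega)]
    simp

lemma deg_le_of_lt {p : ℂ[X]} {n : ℕ} (h : p.degree < (n + 1 : ℕ)) : p.degree ≤ n := by
  rw [degree_lt_iff_coeff_zero] at h
  rw [degree_le_iff_coeff_zero]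
  intro m hm
  exact h m (by exact_mod_cast hm)

lemma smop_degree {v : ℕ → ℂ} {Q : ℕ → ℂ[X]} (h : IsSMOP v Q) (n : ℕ) : (Q n).degree = n := by
  rw [degree_eq_natDegree (h.1 n).ne_zero, h.2.1 n]

lemma smop_coeff {v : ℕ → ℂ} {Q : ℕ → ℂ[X]} (h : IsSMOP v Q) (n : ℕ) : (Q n).coeff n = 1 := by
  have := h.1 n
  rwa [Monic, leadingCoeff, h.2.1 n] at this

lemma smop_orth_aux {v : ℕ → ℂ} {Q : ℕ → ℂ[X]} (h : IsSMOP v Q) (n m : ℕ) (hm : m ≤ n) :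
    ∀ p : ℂ[X], p.degree < m → Lf v (Q n * p) = 0 := by
  induction m with
  | zero =>
    intro p hp
    have : p = 0 := by
      rw [← degree_eq_bot]; simpa using hp
    simp [this]
  | succ m ih =>
    intro p hp
    have h1 := ih (by omega) _ (degree_sub_lt_aux (h.1 m) (h.2.1 m) hp)
    have h2 := h.2.2.1 n m (by omega)
    rw [fapply_eq] at h2
    have : Q n * p = Q n * (p - C (p.coeff m) * Q m) + C (p.coeff m) * (Q n * Q m) := by ring
    rw [this, map_add, h1, Lf_C_mul, h2]
    simp

lemma smop_orth {v : ℕ → ℂ} {Q : ℕ → ℂ[X]} (h : IsSMOP v Q) (n : ℕ) (p : ℂ[X])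
    (hp : p.degree < n) : Lf v (Q n * p) = 0 := smop_orth_aux h n n le_rfl p hp

lemma smop_zero {v : ℕ → ℂ} {Q : ℕ → ℂ[X]} (h : IsSMOP v Q) (n : ℕ) (T : ℂ[X])
    (hT : T.degree < n) (hO : ∀ p : ℂ[X], p.degree < n → Lf v (T * p) = 0) : T = 0 := by
  induction n with
  | zero => rw [← degree_eq_bot]; simpa using hT
  | succ n ih =>
    have h1 := degree_sub_lt_aux (h.1 n) (h.2.1 n) hT
    have h2 := hO (Q n) (by rw [smop_degree h]; exact_mod_cast Nat.lt_succ_self n)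
    have h3 := smop_orth h n _ h1
    have h4 := h.2.2.2 n
    rw [fapply_eq] at h4
    have : T * Q n = Q n * (T - C (T.coeff n) * Q n) + C (T.coeff n) * (Q n * Q n) := by ring
    rw [this, map_add, h3, Lf_C_mul, zero_add] at h2
    have h5 : T.coeff n = 0 := by
      rcases mul_eq_zero.1 h2 with h | h
      · exact h
      · exact absurd h h4
    rw [h5] at h1
    simp only [C_0, zero_mul, sub_zero] at h1
    exact ih h1 (fun p hp => hO p (hp.trans (by exact_mod_cast Nat.lt_succ_self n)))

lemma orth_lift {u uh : ℕ → ℂ} {c : ℂ}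
    (hrel : ∀ n, u n = uh (n + 2) - 2 * c * uh (n + 1) + c ^ 2 * uh n) (T : ℂ[X]) (m : ℕ)
    (h0 : Lf uh T = 0) (h1 : Lf uh ((X - C c) * T) = 0)
    (h2 : ∀ r : ℂ[X], r.degree < m → Lf u (T * r) = 0) (p : ℂ[X])
    (hp : p.degree < (m + 2 : ℕ)) : Lf uh (T * p) = 0 := by
  have hm : ((X - C c) ^ 2 : ℂ[X]).Monic := (monic_X_sub_C c).pow 2
  have hd : ((X - C c) ^ 2 : ℂ[X]).natDegree = 2 := by simp
  have hd' : ((X - C c) ^ 2 : ℂ[X]).degree = (2 : ℕ) := by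
    rw [degree_eq_natDegree hm.ne_zero, hd]
  set q := p /ₘ (X - C c) ^ 2 with hq
  set r := p %ₘ (X - C c) ^ 2 with hr
  have e : r + (X - C c) ^ 2 * q = p := modByMonic_add_div p _
  have hrd : r.degree < (2 : ℕ) := by rw [← hd']; exact degree_modByMonic_lt _ hm
  have hr1 : r = C (r.coeff 1) * X + C (r.coeff 0) := by
    apply eq_X_add_C_of_degree_le_one
    simpa using deg_le_of_lt (n := 1) hrd
  have hqd : q.degree < m := by
    by_cases hp0 : p.degree < (2 : ℕ)
    · have : q = 0 := (divByMonic_eq_zero_iff hm).2 (by rw [hd']; exact hp0)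
      rw [this, degree_zero]; exact WithBot.bot_lt_coe m
    · have h := degree_add_divByMonic (p := p) hm (by rw [hd']; exact not_lt.1 hp0)
      by_cases hq0 : q = 0
      · rw [hq0, degree_zero]; exact WithBot.bot_lt_coe m
      · rw [← hq, hd', degree_eq_natDegree hq0] at h
        rw [← h] at hp
        have : 2 + q.natDegree < m + 2 := by exact_mod_cast hp
        rw [degree_eq_natDegree hq0]
        exact_mod_cast (by omega : q.natDegree < m)
  have e2 : T * p = C (r.coeff 1) * ((X - C c) * T) + C (r.coeff 0 + r.coeff 1 * c) * T
      + (X - C c) ^ 2 * (T * q) := by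
    rw [← e]
    nth_rewrite 1 [hr1]
    simp only [C_add, C_mul]; ring
  rw [e2, map_add, map_add, Lf_C_mul, Lf_C_mul, h0, h1, Lf_rel hrel, h2 q hqd]
  simp

section
variable {u : ℕ → ℂ} {c : ℂ} {P : ℕ → ℂ[X]} {a b : ℕ → ℂ} {P1 : ℕ → ℂ[X]} {uh : ℕ → ℂ}

lemma S_eval (hP : IsSMOP u P) (hrec : HasTTRR P a b)
    (hP1 : HasTTRR P1 (fun n => a (n + 1)) (fun n => b (n + 1)))
    (hrel : ∀ n, u n = uh (n + 2) - 2 * c * uh (n + 1) + c ^ 2 * uh n) (n : ℕ) :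
    ((Spoly u uh c P P1 n).eval c = Lf uh ((X - C c) * P n) ∧
      row2 u uh c P P1 n = Lf uh (P n)) ∧
    ((Spoly u uh c P P1 (n+1)).eval c = Lf uh ((X - C c) * P (n+1)) ∧
      row2 u uh c P P1 (n+1) = Lf uh (P (n+1))) := by
  have hS : ∀ n, Spoly u uh c P P1 (n + 2) = (X - C (b (n + 1))) * Spoly u uh c P P1 (n + 1)
      - C (a (n + 1)) * Spoly u uh c P P1 n := by
    intro n
    have h1 := hrec.2.2 (n + 1) (by omega)
    simp only [Nat.add_sub_cancel] at h1
    have h1' : P (n + 2) = (X - C (b (n + 1))) * P (n + 1) - C (a (n + 1)) * P n := by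
      linear_combination -h1
    rcases n with _ | n
    · have h2 := hP1.2.1
      have h2' : P1 1 = (X - C (b 1)) * P1 0 := by linear_combination -h2
      simp only [Spoly]
      simp [h1', h2']
      ring
    · have h2 := hP1.2.2 (n + 1) (by omega)
      simp only [Nat.add_sub_cancel] at h2
      have h2' : P1 (n + 2) = (X - C (b (n + 2))) * P1 (n + 1) - C (a (n + 2)) * P1 n := by
        linear_combination -h2
      simp only [Spoly, h1']
      simp [h2']
      ring
  have hP1' : P 1 = X - C (b 0) := by
    have := hrec.2.1
    rw [hrec.1] at this
    linear_combination -this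
  have hu : ∀ n, Lf u (P (n + 1)) = 0 := by
    intro n
    have := smop_orth hP (n + 1) 1 (by rw [degree_one]; exact_mod_cast Nat.succ_pos n)
    simpa using this
  have e0 := Lf_rel hrel (1 : ℂ[X])
  rw [mul_one, Lf_one] at e0
  induction n with
  | zero =>
    have q1 : (X - C c) * (X - C (b 0)) = (X - C c) ^ 2 + C (c - b 0) * (X - C c) := by
      simp only [C_sub]; ring
    have q2 : Lf uh (X - C c) = uh 1 - c * uh 0 := by
      rw [map_sub, Lf_X, ← mul_one (C c), Lf_C_mul, Lf_one]
    have q3 : Lf uh (C (b 0)) = b 0 * uh 0 := by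
      rw [← mul_one (C (b 0)), Lf_C_mul, Lf_one]
    refine ⟨⟨?_, ?_⟩, ?_, ?_⟩
    · simp [Spoly, hrec.1, q2]
    · simp [Spoly, row2, hrec.1, Lf_one]
    · simp only [zero_add, hP1', q1, map_add, Lf_C_mul, e0, q2]
      simp [Spoly, hP1', hP1.1]; ring
    · simp only [zero_add, hP1', map_sub, Lf_X, q3]
      simp [Spoly, row2, hP1', hP1.1]; ring
  | succ n ih =>
    obtain ⟨⟨i1, i2⟩, i3, i4⟩ := ih
    refine ⟨⟨i3, i4⟩, ?_⟩
    have h1 := hrec.2.2 (n + 1) (by omega)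
    simp only [Nat.add_sub_cancel] at h1
    have h1' : P (n + 2) = (X - C (b (n + 1))) * P (n + 1) - C (a (n + 1)) * P n := by
      linear_combination -h1
    have k1 : P (n + 2) = (X - C c) * P (n + 1) + C (c - b (n + 1)) * P (n + 1)
        - C (a (n + 1)) * P n := by
      rw [h1']; simp only [C_sub]; ring
    have k2 : (X - C c) * P (n + 2) = (X - C c) ^ 2 * P (n + 1)
        + C (c - b (n + 1)) * ((X - C c) * P (n + 1))
        - C (a (n + 1)) * ((X - C c) * P n) := by
      rw [h1']; simp only [C_sub]; ring
    refine ⟨?_, ?_⟩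
    · rw [k2, map_sub, map_add, Lf_rel hrel, hu, Lf_C_mul, Lf_C_mul, ← i1, ← i3, hS]
      simp
    · show row2 u uh c P P1 (n + 2) = Lf uh (P (n + 2))
      rw [congrArg (Lf uh) k1, map_sub, map_add, Lf_C_mul, Lf_C_mul, ← i3, ← i2, ← i4]
      unfold row2
      rw [hS, h1']
      simp
      ring

lemma comb_orth (hP : IsSMOP u P)
    (hrel : ∀ n, u n = uh (n + 2) - 2 * c * uh (n + 1) + c ^ 2 * uh n) (k : ℕ) (z x y : ℂ)
    (h0 : z * Lf uh (P (k + 2)) + x * Lf uh (P (k + 1)) + y * Lf uh (P k) = 0)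
    (h1 : z * Lf uh ((X - C c) * P (k + 2)) + x * Lf uh ((X - C c) * P (k + 1))
      + y * Lf uh ((X - C c) * P k) = 0) (p : ℂ[X]) (hp : p.degree < (k + 2 : ℕ)) :
    Lf uh ((C z * P (k + 2) + C x * P (k + 1) + C y * P k) * p) = 0 := by
  refine orth_lift (c := c) hrel _ k ?_ ?_ ?_ p hp
  · simpa only [map_add, Lf_C_mul] using h0
  · rw [← h1]
    simp only [← Lf_C_mul, ← map_add]
    congr 1; ring
  · intro r hr
    have t : (C z * P (k + 2) + C x * P (k + 1) + C y * P k) * r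
      = C z * (P (k + 2) * r) + C x * (P (k + 1) * r) + C y * (P k * r) := by ring
    rw [t, map_add, map_add, Lf_C_mul, Lf_C_mul, Lf_C_mul, smop_orth hP k r hr,
      smop_orth hP (k+1) r (hr.trans (by exact_mod_cast Nat.lt_succ_self k)),
      smop_orth hP (k+2) r (hr.trans (by exact_mod_cast (by omega)))]
    simp

lemma comb_degree (hP : IsSMOP u P) (k : ℕ) (x y : ℂ) :
    (C x * P (k + 1) + C y * P k).degree < (k + 2 : ℕ) := by
  rw [degree_lt_iff_coeff_zero]
  intro m hm
  simp only [coeff_add, coeff_C_mul]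
  rw [coeff_eq_zero_of_natDegree_lt (by rw [hP.2.1]; omega),
    coeff_eq_zero_of_natDegree_lt (by rw [hP.2.1]; omega)]
  simp

/-- monic orthogonal polynomials with nonzero determinants exist -/
lemma dne_of_qd (hP : IsSMOP u P)
    (hrel : ∀ n, u n = uh (n + 2) - 2 * c * uh (n + 1) + c ^ 2 * uh n)
    {Q : ℕ → ℂ[X]} (hQ : IsSMOP uh Q) (k : ℕ) :
    Lf uh ((X - C c) * P k) * Lf uh (P (k + 1))
      - Lf uh ((X - C c) * P (k + 1)) * Lf uh (P k) ≠ 0 := by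
  intro hd
  have key : ∀ x y : ℂ, x * Lf uh (P (k + 1)) + y * Lf uh (P k) = 0 →
      x * Lf uh ((X - C c) * P (k + 1)) + y * Lf uh ((X - C c) * P k) = 0 → x = 0 ∧ y = 0 := by
    intro x y h0 h1
    have ho := comb_orth hP hrel k 0 x y (by linear_combination h0) (by linear_combination h1)
    simp only [C_0, zero_mul, zero_add] at ho
    have hz := smop_zero hQ (k + 2) _ (comb_degree hP k x y) ho
    have hx : x = 0 := by
      have := congrArg (fun p => coeff p (k + 1)) hz
      simp only [coeff_add, coeff_C_mul, smop_coeff hP] at this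
      rw [coeff_eq_zero_of_natDegree_lt (p := P k) (by rw [hP.2.1]; omega)] at this
      simpa using this
    refine ⟨hx, ?_⟩
    have := congrArg (fun p => coeff p k) hz
    simpa [hx, smop_coeff hP] using this
  have k1 := key (Lf uh (P k)) (-Lf uh (P (k + 1))) (by ring) (by linear_combination -hd)
  have k2 := key (Lf uh ((X - C c) * P k)) (-Lf uh ((X - C c) * P (k + 1)))
    (by linear_combination hd) (by ring)
  have k3 := key 1 0 (by have := k1.2; linear_combination -this)
    (by have := k2.2; linear_combination -this)
  exact one_ne_zero k3.1

lemma exists_Q (hP : IsSMOP u P) (hP0 : P 0 = 1)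
    (hrel : ∀ n, u n = uh (n + 2) - 2 * c * uh (n + 1) + c ^ 2 * uh n) (h0 : uh 0 ≠ 0)
    (hd : ∀ k, Lf uh ((X - C c) * P k) * Lf uh (P (k + 1))
      - Lf uh ((X - C c) * P (k + 1)) * Lf uh (P k) ≠ 0) (n : ℕ) :
    ∃ q : ℂ[X], q.Monic ∧ q.natDegree = n ∧ ∀ p : ℂ[X], p.degree < n → Lf uh (q * p) = 0 := by
  match n with
  | 0 =>
    refine ⟨1, monic_one, by simp, fun p hp => ?_⟩
    have : p = 0 := by rw [← degree_eq_bot]; simpa using hp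
    simp [this]
  | 1 =>
    refine ⟨X - C (uh 1 / uh 0), monic_X_sub_C _, by simp, fun p hp => ?_⟩
    have hp' : p = C (p.coeff 0) := eq_C_of_degree_le_zero
      (by simpa using deg_le_of_lt (n := 0) hp)
    rw [hp', mul_comm, Lf_C_mul, map_sub, Lf_X, ← mul_one (C (uh 1 / uh 0)), Lf_C_mul, Lf_one]
    field_simp
    simp
  | k + 2 =>
    set D := Lf uh ((X - C c) * P k) * Lf uh (P (k + 1))
      - Lf uh ((X - C c) * P (k + 1)) * Lf uh (P k) with hD
    have hDk : D ≠ 0 := hd k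
    set A2 := Lf uh (P (k + 2)) with hA2
    set A1 := Lf uh (P (k + 1)) with hA1
    set A0 := Lf uh (P k) with hA0
    set B2 := Lf uh ((X - C c) * P (k + 2)) with hB2
    set B1 := Lf uh ((X - C c) * P (k + 1)) with hB1
    set B0 := Lf uh ((X - C c) * P k) with hB0
    have ho := comb_orth hP hrel k 1 (-(A2 * B0 - A0 * B2) / D) ((A2 * B1 - A1 * B2) / D)
      (by rw [← hA2, ← hA1, ← hA0]; field_simp; rw [hD]; ring)
      (by rw [← hB2, ← hB1, ← hB0]; field_simp; rw [hD]; ring)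
    rw [C_1, one_mul, add_assoc] at ho
    have hdl := comb_degree hP k (-(A2 * B0 - A0 * B2) / D) ((A2 * B1 - A1 * B2) / D)
    rw [← smop_degree hP (k + 2)] at hdl
    refine ⟨_, (hP.1 (k + 2)).add_of_left hdl, ?_, ho⟩
    rw [natDegree_add_eq_left_of_degree_lt hdl, hP.2.1]

lemma qd_of_dne (hP : IsSMOP u P) (hP0 : P 0 = 1)
    (hrel : ∀ n, u n = uh (n + 2) - 2 * c * uh (n + 1) + c ^ 2 * uh n) (h0 : uh 0 ≠ 0)
    (hd : ∀ k, Lf uh ((X - C c) * P k) * Lf uh (P (k + 1))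
      - Lf uh ((X - C c) * P (k + 1)) * Lf uh (P k) ≠ 0) : IsQuasiDefinite uh := by
  choose Q hm hdeg ho using exists_Q hP hP0 hrel h0 hd
  have hdg : ∀ n, (Q n).degree = n := fun n => by
    rw [degree_eq_natDegree (hm n).ne_zero, hdeg n]
  refine ⟨Q, hm, hdeg, ?_, ?_⟩
  · intro n m hnm
    rw [fapply_eq]
    rcases lt_or_gt_of_ne hnm with h | h
    · rw [mul_comm]; exact ho m _ (by rw [hdg]; exact_mod_cast h)
    · exact ho n _ (by rw [hdg]; exact_mod_cast h)
  · intro n hz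
    rw [fapply_eq] at hz
    rcases n with _ | k
    · have : Q 0 = 1 := (hm 0).natDegree_eq_zero.1 (hdeg 0)
      rw [this, mul_one, Lf_one] at hz
      exact h0 hz
    · have hall : ∀ p : ℂ[X], p.degree < (k + 2 : ℕ) → Lf uh (Q (k + 1) * p) = 0 := by
        intro p hp
        have h1 := ho (k + 1) _ (degree_sub_lt_aux (hm (k + 1)) (hdeg (k + 1)) hp)
        have : Q (k + 1) * p = Q (k + 1) * (p - C (p.coeff (k + 1)) * Q (k + 1))
          + C (p.coeff (k + 1)) * (Q (k + 1) * Q (k + 1)) := by ring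
        rw [this, map_add, h1, Lf_C_mul, hz]; simp
      have hc : (Q (k + 1)).coeff (k + 1) = 1 := by
        have := hm (k + 1); rwa [Monic, leadingCoeff, hdeg] at this
      have d1 := degree_sub_lt_aux (p := Q (k + 1)) (hP.1 (k + 1)) (hP.2.1 (k + 1))
        (by rw [hdg]; exact_mod_cast Nat.lt_succ_self _)
      rw [hc, C_1, one_mul] at d1
      set e := (Q (k + 1) - P (k + 1)).coeff k with he
      have d2 := degree_sub_lt_aux (hP.1 k) (hP.2.1 k) d1
      rw [← he] at d2
      have hz2 := smop_zero hP k _ d2 (by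
        intro p hp
        have hk := Lf_rel hrel (Q (k + 1) * p)
        rw [mul_left_comm, hall _ (by
          rw [degree_mul, degree_pow, degree_X_sub_C, add_comm]
          push_cast
          simpa using WithBot.add_lt_add_right (by simp) hp)] at hk
        have t : (Q (k + 1) - P (k + 1) - C e * P k) * p
          = Q (k + 1) * p - P (k + 1) * p - C e * (P k * p) := by ring
        rw [t, map_sub, map_sub, ← hk, Lf_C_mul, smop_orth hP k p hp, smop_orth hP (k + 1) p
          (hp.trans (by exact_mod_cast Nat.lt_succ_self k))]
        simp)
      have hQ : Q (k + 1) = P (k + 1) + C e * P k := by linear_combination hz2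
      have f0 := hall 1 (by rw [degree_one]; exact_mod_cast Nat.succ_pos _)
      have f1 := hall (X - C c) (by rw [degree_X_sub_C]; exact_mod_cast (by omega))
      rw [mul_one, hQ, map_add, Lf_C_mul] at f0
      rw [mul_comm, hQ, mul_add, mul_left_comm, map_add, Lf_C_mul] at f1
      apply hd k
      linear_combination (Lf uh ((X - C c) * P k)) * f0 - (Lf uh (P k)) * f1

end

/-- quasi-definiteness criterion for a quadratic Geronimus transformation
`u = (x-c)² û`, together with the determinantal formula for the SMOP of `û`. -/
theorem stmt_2 (u : ℕ → ℂ) (c : ℂ) (P : ℕ → Polynomial ℂ) (hP : IsSMOP u P)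
    (a b : ℕ → ℂ) (hrec : HasTTRR P a b) (ha : ∀ n, 1 ≤ n → a n ≠ 0)
    (P1 : ℕ → Polynomial ℂ)
    (hP1 : HasTTRR P1 (fun n => a (n + 1)) (fun n => b (n + 1)))
    (uh : ℕ → ℂ)
    (hrel : ∀ n, u n = uh (n + 2) - 2 * c * uh (n + 1) + c ^ 2 * uh n) :
    (IsQuasiDefinite uh ↔ (uh 0 ≠ 0 ∧ ∀ n, 2 ≤ n → dstar u uh c P P1 n ≠ 0))
    ∧ ((uh 0 ≠ 0 ∧ ∀ n, 2 ≤ n → dstar u uh c P P1 n ≠ 0) →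
        ∀ Q : ℕ → Polynomial ℂ, IsSMOP uh Q →
          Q 0 = 1 ∧ Q 1 = X - C (uh 1 / uh 0) ∧
          ∀ n, 2 ≤ n →
            C (dstar u uh c P P1 n) * Q n =
              Matrix.det
                !![P n, P (n - 1), P (n - 2);
                   C (row2 u uh c P P1 n), C (row2 u uh c P P1 (n - 1)),
                     C (row2 u uh c P P1 (n - 2));
                   C ((Spoly u uh c P P1 n).eval c), C ((Spoly u uh c P P1 (n - 1)).eval c),
                     C ((Spoly u uh c P P1 (n - 2)).eval c)]) := by
  have hS := fun n => (S_eval hP hrec hP1 hrel n).1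
  have hdst : ∀ k, dstar u uh c P P1 (k + 2) = Lf uh ((X - C c) * P k) * Lf uh (P (k + 1))
      - Lf uh ((X - C c) * P (k + 1)) * Lf uh (P k) := by
    intro k
    have e1 : k + 2 - 2 = k := by omega
    have e2 : k + 2 - 1 = k + 1 := by omega
    rw [dstar, e1, e2, (hS k).1, (hS k).2, (hS (k + 1)).1, (hS (k + 1)).2]
  refine ⟨⟨?_, ?_⟩, ?_⟩
  · rintro ⟨Q, hQ⟩
    refine ⟨?_, ?_⟩
    · have h1 := hQ.2.2.2 0
      have : Q 0 = 1 := (hQ.1 0).natDegree_eq_zero.1 (hQ.2.1 0)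
      rwa [fapply_eq, this, mul_one, Lf_one] at h1
    · intro n hn
      obtain ⟨k, rfl⟩ : ∃ k, n = k + 2 := ⟨n - 2, by omega⟩
      rw [hdst]
      exact dne_of_qd hP hrel hQ k
  · rintro ⟨h0, hd⟩
    exact qd_of_dne hP hrec.1 hrel h0 (fun k => by rw [← hdst]; exact hd _ (by omega))
  · rintro ⟨h0, hd⟩ Q hQ
    have hQ0 : Q 0 = 1 := (hQ.1 0).natDegree_eq_zero.1 (hQ.2.1 0)
    refine ⟨hQ0, ?_, ?_⟩
    · have h1 : Q 1 = X + C ((Q 1).coeff 0) := by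
        have := eq_X_add_C_of_degree_le_one (p := Q 1) (by rw [smop_degree hQ]; simp)
        rwa [smop_coeff hQ, C_1, one_mul] at this
      have h2 := hQ.2.2.1 1 0 (by omega)
      rw [fapply_eq, hQ0, mul_one, h1, map_add, Lf_X, ← mul_one (C _), Lf_C_mul, Lf_one] at h2
      have h3 : (Q 1).coeff 0 = - (uh 1 / uh 0) := by
        field_simp
        linear_combination h2
      rw [h1, h3, C_neg, sub_eq_add_neg]
    · intro n hn
      obtain ⟨k, rfl⟩ : ∃ k, n = k + 2 := ⟨n - 2, by omega⟩
      have e1 : k + 2 - 2 = k := by omega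
      have e2 : k + 2 - 1 = k + 1 := by omega
      rw [e1, e2, Matrix.det_fin_three]
      simp only [Matrix.of_apply, Matrix.cons_val', Matrix.cons_val_zero, Matrix.cons_val_one,
        Matrix.cons_val, Matrix.cons_val_fin_one]
      rw [hdst, (hS k).1, (hS k).2, (hS (k + 1)).1, (hS (k + 1)).2, (hS (k + 2)).1,
        (hS (k + 2)).2]
      generalize hA2 : Lf uh (P (k + 2)) = A2
      generalize hA1 : Lf uh (P (k + 1)) = A1
      generalize hA0 : Lf uh (P k) = A0
      generalize hB2 : Lf uh ((X - C c) * P (k + 2)) = B2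
      generalize hB1 : Lf uh ((X - C c) * P (k + 1)) = B1
      generalize hB0 : Lf uh ((X - C c) * P k) = B0
      have ho := comb_orth hP hrel k (B0 * A1 - B1 * A0) (-(A2 * B0 - A0 * B2))
        (A2 * B1 - A1 * B2)
        (by rw [hA2, hA1, hA0]; ring)
        (by rw [hB2, hB1, hB0]; ring)
      have hz := smop_zero hQ (k + 2)
        (C (B0 * A1 - B1 * A0) * Q (k + 2) - (C (B0 * A1 - B1 * A0) * P (k + 2)
          + C (-(A2 * B0 - A0 * B2)) * P (k + 1) + C (A2 * B1 - A1 * B2) * P k))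
        (by
          rw [← sub_sub, ← sub_sub, ← mul_sub, sub_sub]
          refine (degree_sub_le _ _).trans_lt (max_lt ?_ (comb_degree hP k _ _))
          refine (by rw [← smul_eq_C_mul]; exact degree_smul_le _ _ :
            (C (B0 * A1 - B1 * A0) * (Q (k + 2) - P (k + 2))).degree
              ≤ (Q (k + 2) - P (k + 2)).degree).trans_lt ?_
          have := degree_sub_lt_aux (p := Q (k + 2)) (hP.1 (k + 2)) (hP.2.1 (k + 2))
            (by rw [smop_degree hQ]; exact_mod_cast Nat.lt_succ_self _)
          rwa [smop_coeff hQ, C_1, one_mul] at this)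
        (by
          intro p hp
          rw [sub_mul, map_sub, ho p hp, mul_assoc, Lf_C_mul, smop_orth hQ _ p hp]
          simp)
      simp only [C_sub, C_neg, C_mul] at hz ⊢
      linear_combination hz
end
end

section
/- Let u be quasi-definite with SMOP (P_n), Jacobi matrix J, let c ∈ ℂ, and let û be quasi-definite with u = (x−c)²û, SMOP (Q_n) and Jacobi matrix Ĵ. Then W(Q_n, Q_{n+1})(c) ≠ 0 for all n ≥ 0, and, defining the semi-infinite matrices L (lower triangular with L_{n,n} = 1, L_{n,n−1} = α_{n,n−1}, L_{n,n−2} = α_{n,n−2}, all other entries 0, where the α's come from the expansion Q_n = P_n + α_{n,n−1}P_{n−1} + α_{n,n−2}P_{n−2}) and U (upper triangular with U_{n,n} = β_{n,n} = W(Q_{n+1},Q_{n+2})(c)/W(Q_n,Q_{n+1})(c), U_{n,n+1} = β_{n,n+1} = −W(Q_n,Q_{n+2})(c)/W(Q_n,Q_{n+1})(c), U_{n,n+2} = 1, all other entries 0), one has the entrywise matrix identities (J − cI)² = U·L and (Ĵ − cI)² = L·U. -/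
open Polynomial

noncomputable section

/-- Lower triangular matrix with `1`'s on the diagonal and the connection coefficients
`α_{n,n-1}`, `α_{n,n-2}` on the first two subdiagonals. -/
def Lmat (α : ℕ → ℕ → ℂ) (i j : ℕ) : ℂ :=
  if i = j then 1 else if i = j + 1 then α i (i - 1)
    else if i = j + 2 then α i (i - 2) else 0

/-- Upper triangular matrix with diagonal `β_{n,n} = W(Q_{n+1},Q_{n+2})(c)/W(Q_n,Q_{n+1})(c)`,
superdiagonal `β_{n,n+1} = -W(Q_n,Q_{n+2})(c)/W(Q_n,Q_{n+1})(c)` and second superdiagonal `1`. -/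
def Umat (Q : ℕ → Polynomial ℂ) (c : ℂ) (i j : ℕ) : ℂ :=
  if j = i then Wr (Q (i + 1)) (Q (i + 2)) c / Wr (Q i) (Q (i + 1)) c
    else if j = i + 1 then -(Wr (Q i) (Q (i + 2)) c) / Wr (Q i) (Q (i + 1)) c
      else if j = i + 2 then 1 else 0

/-- `J - cI` for a monic Jacobi matrix. -/
def Jc (a b : ℕ → ℂ) (c : ℂ) (i j : ℕ) : ℂ :=
  jacobi a b i j - if i = j then c else 0

theorem fapply_add (u : ℕ → ℂ) (p q : ℂ[X]) : fapply u (p + q) = fapply u p + fapply u q := by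
  unfold fapply
  exact Polynomial.sum_add_index p q _ (by simp) (by intros; ring)

theorem fapply_C_mul (u : ℕ → ℂ) (z : ℂ) (p : ℂ[X]) : fapply u (C z * p) = z * fapply u p := by
  unfold fapply
  rw [← Polynomial.smul_eq_C_mul, Polynomial.sum_smul_index _ _ _ (by simp)]
  simp only [Polynomial.sum, Finset.mul_sum, mul_assoc]

/-- The functional as a linear map. -/
def flin (u : ℕ → ℂ) : ℂ[X] →ₗ[ℂ] ℂ where
  toFun := fapply u
  map_add' := fapply_add u
  map_smul' := by intro z p; rw [Polynomial.smul_eq_C_mul, fapply_C_mul]; simp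

theorem fapply_sum (u : ℕ → ℂ) (s : Finset ℕ) (f : ℕ → ℂ[X]) :
    fapply u (∑ k ∈ s, f k) = ∑ k ∈ s, fapply u (f k) := map_sum (flin u) f s

theorem fapply_monomial (u : ℕ → ℂ) (n : ℕ) (z : ℂ) : fapply u (monomial n z) = z * u n := by
  unfold fapply
  exact Polynomial.sum_monomial_index _ _ (by simp)

theorem fapply_rel (u uh : ℕ → ℂ) (c : ℂ)
    (hrel : ∀ n, u n = uh (n + 2) - 2 * c * uh (n + 1) + c ^ 2 * uh n) (p : ℂ[X]) :
    fapply u p = fapply uh ((X - C c) ^ 2 * p) := by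
  induction p using Polynomial.induction_on' with
  | add p q hp hq => rw [mul_add, fapply_add, fapply_add, hp, hq]
  | monomial n z =>
    have : (X - C c) ^ 2 * monomial n z
        = monomial (n + 2) z + (monomial (n + 1) (-2 * c * z) + monomial n (c ^ 2 * z)) := by
      simp only [← Polynomial.C_mul_X_pow_eq_monomial, map_mul, map_neg, map_pow]
      have : (C (2 : ℂ)) = 2 := rfl
      rw [this]
      ring
    rw [this]
    simp only [fapply_add, fapply_monomial, hrel]
    ring

theorem coef_of_sum {u : ℕ → ℂ} {P : ℕ → ℂ[X]} (hP : IsSMOP u P) (N : ℕ) (d : ℕ → ℂ) (j : ℕ)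
    (hj : j < N) :
    fapply u ((∑ k ∈ Finset.range N, C (d k) * P k) * P j) = d j * fapply u (P j * P j) := by
  rw [Finset.sum_mul, fapply_sum, Finset.sum_eq_single j]
  · rw [mul_assoc, fapply_C_mul]
  · intro k _ hk
    rw [mul_assoc, fapply_C_mul, hP.2.2.1 k j hk, mul_zero]
  · intro h; simp at h; omega

theorem smop_expand {u : ℕ → ℂ} {P : ℕ → ℂ[X]} (hP : IsSMOP u P) (N : ℕ) :
    ∀ p : ℂ[X], p.degree < N → ∃ d : ℕ → ℂ, p = ∑ k ∈ Finset.range N, C (d k) * P k := by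
  induction N with
  | zero =>
    intro p hp
    refine ⟨0, ?_⟩
    simpa using hp
  | succ N ih =>
    intro p hp
    have h1 : (p - C (p.coeff N) * P N).degree < N := by
      rw [Polynomial.degree_lt_iff_coeff_zero] at hp ⊢
      intro m hm
      rcases Nat.eq_or_lt_of_le hm with h | h
      · subst h
        have : (P N).coeff N = 1 := by
          have := hP.1 N
          rwa [Polynomial.Monic, Polynomial.leadingCoeff, hP.2.1 N] at this
        simp [this]
      · have h2 : (P N).coeff m = 0 := Polynomial.coeff_eq_zero_of_natDegree_lt (by rw [hP.2.1]; exact h)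
        simp [h2, hp m h]
    obtain ⟨d, hd⟩ := ih _ h1
    refine ⟨fun k => if k = N then p.coeff N else d k, ?_⟩
    rw [Finset.sum_range_succ]
    have : ∑ k ∈ Finset.range N, C (if k = N then p.coeff N else d k) * P k
        = ∑ k ∈ Finset.range N, C (d k) * P k := by
      refine Finset.sum_congr rfl fun k hk => ?_
      rw [if_neg (by simp at hk; omega)]
    rw [this, ← hd]
    simp

/-- `F = A G` for a matrix `A` with at most two superdiagonals. -/
def MRep (A : ℕ → ℕ → ℂ) (F G : ℕ → ℂ[X]) : Prop :=
  (∀ i k, i + 2 < k → A i k = 0) ∧ ∀ i, F i = ∑ k ∈ Finset.range (i + 3), C (A i k) * G k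

theorem MRep.mul {A : ℕ → ℕ → ℂ} {F G : ℕ → ℂ[X]} (h : MRep A F G) (q : ℂ[X]) :
    MRep A (fun i => q * F i) (fun i => q * G i) := by
  refine ⟨h.1, fun i => ?_⟩
  simp only
  rw [h.2 i, Finset.mul_sum]
  exact Finset.sum_congr rfl fun k _ => by ring

theorem mprod_eq {A B : ℕ → ℕ → ℂ} (hA : ∀ i k, i + 2 < k → A i k = 0) (i j : ℕ) :
    mprod A B i j = ∑ k ∈ Finset.range (i + 3), A i k * B k j := by
  unfold mprod
  refine tsum_eq_sum fun k hk => ?_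
  rw [hA i k (by simp at hk; omega), zero_mul]

theorem MRep.comp {A B : ℕ → ℕ → ℂ} {F G H : ℕ → ℂ[X]} (hA : MRep A F G) (hB : MRep B G H) (i : ℕ) :
    F i = ∑ l ∈ Finset.range (i + 5), C (mprod A B i l) * H l := by
  have h1 : ∀ k ∈ Finset.range (i + 3), C (A i k) * G k
      = ∑ l ∈ Finset.range (i + 5), C (A i k * B k l) * H l := by
    intro k hk
    have hk' : k < i + 3 := by simpa using hk
    rw [hB.2 k, Finset.sum_subset (Finset.range_mono (show k + 3 ≤ i + 5 by omega)), Finset.mul_sum]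
    · exact Finset.sum_congr rfl fun l _ => by rw [map_mul]; ring
    · intro l _ hl
      rw [hB.1 k l (by simp at hl; omega)]; simp
  rw [hA.2 i, Finset.sum_congr rfl h1, Finset.sum_comm]
  refine Finset.sum_congr rfl fun l _ => ?_
  rw [mprod_eq hA.1, map_sum, Finset.sum_mul]

theorem MRep.comp_zero {A B : ℕ → ℕ → ℂ} {F G H : ℕ → ℂ[X]} (hA : MRep A F G) (hB : MRep B G H)
    (i j : ℕ) (h : i + 5 ≤ j) : mprod A B i j = 0 := by
  rw [mprod_eq hA.1]
  refine Finset.sum_eq_zero fun k hk => ?_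
  rw [hB.1 k j (by simp at hk; omega), mul_zero]

theorem comp_unique {A B A' B' : ℕ → ℕ → ℂ} {F G G' H : ℕ → ℂ[X]} {u : ℕ → ℂ} (hH : IsSMOP u H)
    (hA : MRep A F G) (hB : MRep B G H) (hA' : MRep A' F G') (hB' : MRep B' G' H) (i j : ℕ) :
    mprod A B i j = mprod A' B' i j := by
  by_cases h : i + 5 ≤ j
  · rw [hA.comp_zero hB i j h, hA'.comp_zero hB' i j h]
  · have h1 := coef_of_sum hH (i + 5) (fun l => mprod A B i l) j (by omega)
    have h2 := coef_of_sum hH (i + 5) (fun l => mprod A' B' i l) j (by omega)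
    rw [← hA.comp hB i] at h1
    rw [← hA'.comp hB' i, h1] at h2
    exact mul_right_cancel₀ (hH.2.2.2 j) h2

theorem rep_Jc {P : ℕ → ℂ[X]} {a b : ℕ → ℂ} (h : HasTTRR P a b) (c : ℂ) :
    MRep (Jc a b c) (fun i => (X - C c) * P i) P := by
  refine ⟨fun i k hk => ?_, fun i => ?_⟩
  · unfold Jc jacobi
    rw [if_neg (by omega), if_neg (by omega), if_neg (by omega), if_neg (by omega), sub_zero]
  · rcases i with _ | m
    · simp only [sub_mul, h.2.1]
      simp [Finset.sum_range_succ, Jc, jacobi]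
      ring
    · have := h.2.2 (m + 1) (by omega)
      simp only [sub_mul, this]
      rw [show m + 1 + 3 = m + 1 + 1 + 1 + 1 by ring]
      simp only [Finset.sum_range_succ]
      rw [Finset.sum_eq_zero (s := Finset.range m)]
      · simp [Jc, jacobi, show ¬ (m = m + 1 + 1) by omega]
        ring
      · intro k hk
        have hk' : k < m := by simpa using hk
        unfold Jc jacobi
        rw [if_neg (by omega), if_neg (by omega), if_neg (by omega), if_neg (by omega)]
        simp

theorem rep_L {P Q : ℕ → ℂ[X]} {α : ℕ → ℕ → ℂ}
    (hQ0 : Q 0 = P 0)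
    (hQ1 : Q 1 = P 1 + C (α 1 0) * P 0)
    (hQn : ∀ n, 2 ≤ n → Q n = P n + C (α n (n - 1)) * P (n - 1) + C (α n (n - 2)) * P (n - 2)) :
    MRep (Lmat α) Q P := by
  refine ⟨fun i k hk => ?_, fun i => ?_⟩
  · unfold Lmat
    rw [if_neg (by omega), if_neg (by omega), if_neg (by omega)]
  · rcases i with _ | _ | m
    · simp [Finset.sum_range_succ, Lmat, hQ0]
    · simp [Finset.sum_range_succ, Lmat, hQ1]
      ring
    · rw [hQn (m + 1 + 1) (by omega)]
      rw [show m + 1 + 1 + 3 = m + 1 + 1 + 1 + 1 + 1 by ring]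
      simp only [Finset.sum_range_succ]
      rw [Finset.sum_eq_zero (s := Finset.range m)]
      · simp [Lmat, show ¬ (m + 1 + 1 = m) by omega]
        ring
      · intro k hk
        have hk' : k < m := by simpa using hk
        unfold Lmat
        rw [if_neg (by omega), if_neg (by omega), if_neg (by omega)]
        simp

theorem key {u uh : ℕ → ℂ} {c : ℂ} {P Q : ℕ → ℂ[X]} (hP : IsSMOP u P)
    (hrel : ∀ n, u n = uh (n + 2) - 2 * c * uh (n + 1) + c ^ 2 * uh n)
    (hQ : IsSMOP uh Q) {α : ℕ → ℕ → ℂ} (hL : MRep (Lmat α) Q P) (n : ℕ) :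
    ∃ r s : ℂ, s ≠ 0 ∧ (X - C c) ^ 2 * P n = Q (n + 2) + C r * Q (n + 1) + C s * Q n := by
  have hmon : ((X - C c) ^ 2 * P n).Monic := ((monic_X_sub_C c).pow 2).mul (hP.1 n)
  have hdeg : ((X - C c) ^ 2 * P n).natDegree = n + 2 := by
    rw [((monic_X_sub_C c).pow 2).natDegree_mul (hP.1 n), (monic_X_sub_C c).natDegree_pow,
      natDegree_X_sub_C, hP.2.1]
    ring
  have hlt : ((X - C c) ^ 2 * P n - Q (n + 2)).degree < ((n + 2 : ℕ) : WithBot ℕ) := by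
    have h := degree_sub_lt_left (p := (X - C c) ^ 2 * P n) (q := Q (n + 2)) ?_ hmon.ne_zero ?_
    · rwa [degree_eq_natDegree hmon.ne_zero, hdeg] at h
    · rw [degree_eq_natDegree hmon.ne_zero, hdeg, degree_eq_natDegree (hQ.1 _).ne_zero, hQ.2.1]
    · rw [hmon.leadingCoeff, (hQ.1 _).leadingCoeff]
  obtain ⟨d, hd⟩ := smop_expand hQ (n + 2) _ hlt
  have hco : ∀ k, k ≤ n → d k * fapply uh (Q k * Q k) = Lmat α k n * fapply u (P n * P n) := by
    intro k hk
    have h1 := coef_of_sum hQ (n + 2) d k (by omega)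
    rw [← hd] at h1
    have h2 : ((X - C c) ^ 2 * P n - Q (n + 2)) * Q k
        = (X - C c) ^ 2 * (Q k * P n) + C (-1) * (Q (n + 2) * Q k) := by
      simp only [map_neg, map_one]; ring
    rw [h2, fapply_add, fapply_C_mul, hQ.2.2.1 (n + 2) k (by omega), ← fapply_rel u uh c hrel,
      mul_zero, add_zero] at h1
    rw [← h1]
    by_cases hkn : n < k + 3
    · rw [hL.2 k, coef_of_sum hP _ _ n hkn]
    · rw [hL.1 k n (by omega), zero_mul, hL.2 k, Finset.sum_mul, fapply_sum]
      refine Finset.sum_eq_zero fun l hl => ?_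
      rw [mul_assoc, fapply_C_mul, hP.2.2.1 l n (by simp at hl; omega), mul_zero]
  refine ⟨d (n + 1), d n, ?_, ?_⟩
  · intro h0
    have := hco n le_rfl
    rw [h0, zero_mul] at this
    simp [Lmat] at this
    exact hP.2.2.2 n this.symm
  · have hz : ∑ k ∈ Finset.range n, C (d k) * Q k = 0 := by
      refine Finset.sum_eq_zero fun k hk => ?_
      have hk' : k < n := by simpa using hk
      have := hco k hk'.le
      unfold Lmat at this
      rw [if_neg (by omega), if_neg (by omega), if_neg (by omega), zero_mul] at this
      rw [(mul_eq_zero.mp this).resolve_right (hQ.2.2.2 k)]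
      simp
    rw [Finset.sum_range_succ, Finset.sum_range_succ, hz] at hd
    rw [sub_eq_iff_eq_add.mp hd]
    ring

theorem wr_rel {c r s : ℂ} {p q0 q1 q2 : ℂ[X]}
    (h : (X - C c) ^ 2 * p = q2 + C r * q1 + C s * q0) :
    Wr q1 q2 c = s * Wr q0 q1 c ∧ Wr q0 q2 c = - r * Wr q0 q1 c := by
  have h1 := congrArg (eval c) h
  have h2 := congrArg (fun q => eval c (derivative q)) h
  simp [derivative_pow] at h1 h2
  unfold Wr
  constructor
  · linear_combination (-eval c q1) * h2 + eval c (derivative q1) * h1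
  · linear_combination (-eval c q0) * h2 + eval c (derivative q0) * h1

/-- for a quadratic Geronimus transformation `u = (x-c)² û`, one has
`W(Q_n,Q_{n+1})(c) ≠ 0` for all `n`, `(J - cI)² = U·L` and `(Ĵ - cI)² = L·U`. -/
theorem stmt_4 (u : ℕ → ℂ) (c : ℂ) (P : ℕ → Polynomial ℂ) (hP : IsSMOP u P)
    (a b : ℕ → ℂ) (hrec : HasTTRR P a b) (ha : ∀ n, 1 ≤ n → a n ≠ 0)
    (uh : ℕ → ℂ)
    (hrel : ∀ n, u n = uh (n + 2) - 2 * c * uh (n + 1) + c ^ 2 * uh n)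
    (Q : ℕ → Polynomial ℂ) (hQ : IsSMOP uh Q)
    (ah bh : ℕ → ℂ) (hrecQ : HasTTRR Q ah bh) (hah : ∀ n, 1 ≤ n → ah n ≠ 0)
    (α : ℕ → ℕ → ℂ)
    (hQ0 : Q 0 = P 0)
    (hQ1 : Q 1 = P 1 + C (α 1 0) * P 0)
    (hQn : ∀ n, 2 ≤ n → Q n = P n + C (α n (n - 1)) * P (n - 1) + C (α n (n - 2)) * P (n - 2)) :
    (∀ n, Wr (Q n) (Q (n + 1)) c ≠ 0)
    ∧ (∀ i j, mprod (Jc a b c) (Jc a b c) i j = mprod (Umat Q c) (Lmat α) i j)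
    ∧ (∀ i j, mprod (Jc ah bh c) (Jc ah bh c) i j = mprod (Lmat α) (Umat Q c) i j) := by
  have hL : MRep (Lmat α) Q P := rep_L hQ0 hQ1 hQn
  have hK := fun n => key hP hrel hQ hL n
  have hW : ∀ n, Wr (Q n) (Q (n + 1)) c ≠ 0 := by
    intro n
    induction n with
    | zero =>
      have h1 : Q 1 = X - C (bh 0) := by
        have := hrecQ.2.1
        rw [hrecQ.1] at this
        linear_combination -this
      simp [Wr, h1, hrecQ.1]
    | succ n ih =>
      obtain ⟨r, s, hs, h⟩ := hK n
      rw [(wr_rel h).1]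
      exact mul_ne_zero hs ih
  have hU : MRep (Umat Q c) (fun i => (X - C c) * ((X - C c) * P i)) Q := by
    refine ⟨fun i k hk => ?_, fun i => ?_⟩
    · unfold Umat
      rw [if_neg (by omega), if_neg (by omega), if_neg (by omega)]
    · obtain ⟨r, s, hs, h⟩ := hK i
      obtain ⟨w1, w2⟩ := wr_rel h
      have e0 : Umat Q c i i = s := by
        simp only [Umat, if_true]
        rw [w1, mul_div_cancel_right₀ _ (hW i)]
      have e1 : Umat Q c i (i + 1) = r := by
        simp only [Umat, if_true]
        rw [if_neg (by omega), w2, neg_mul, neg_neg, mul_div_cancel_right₀ _ (hW i)]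
      have e2 : Umat Q c i (i + 2) = 1 := by
        simp [Umat]
      rw [Finset.sum_range_succ, Finset.sum_range_succ, Finset.sum_range_succ,
        Finset.sum_eq_zero, e0, e1, e2]
      · simp only [map_one]
        linear_combination h
      · intro k hk
        have hk' : k < i := by simpa using hk
        unfold Umat
        rw [if_neg (by omega), if_neg (by omega), if_neg (by omega)]
        simp
  refine ⟨hW, fun i j => ?_, fun i j => ?_⟩
  · exact comp_unique hP ((rep_Jc hrec c).mul (X - C c)) (rep_Jc hrec c) hU hL i j
  · exact comp_unique hQ ((rep_Jc hrecQ c).mul (X - C c)) (rep_Jc hrecQ c)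
      ((hL.mul (X - C c)).mul (X - C c)) hU i j
end
end

section
/- The linear functionals u and u^{-1} cannot be simultaneously positive definite: if u is quasi-definite with recurrence coefficients (a_n, b_n) satisfying b_n ∈ ℝ for all n ≥ 0 and a_n > 0 for all n ≥ 1 (u positive definite), and if u^{-1} is quasi-definite with recurrence coefficients (a^−_n, b^−_n), then a^−_1 = −(b_0² + a_1) < 0, so it is not the case that b^−_n ∈ ℝ for all n and a^−_n > 0 for all n ≥ 1. -/
open Polynomial

noncomputable section

theorem aux_add (u : ℕ → ℂ) (p q : Polynomial ℂ) :
    fapply u (p + q) = fapply u p + fapply u q := by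
  unfold fapply
  exact Polynomial.sum_add_index p q _ (by simp) (by intros; ring)

theorem aux_mon (u : ℕ → ℂ) (n : ℕ) (c : ℂ) :
    fapply u (C c * X ^ n) = c * u n := by
  unfold fapply
  rw [Polynomial.C_mul_X_pow_eq_monomial]
  exact Polynomial.sum_monomial_index c (fun k ck => ck * u k) (by simp)

theorem aux_moments (u : ℕ → ℂ) (P : ℕ → Polynomial ℂ) (hP : IsSMOP u P)
    (a b : ℕ → ℂ) (h : HasTTRR P a b) :
    u 1 = b 0 * u 0 ∧ u 2 = (b 0 ^ 2 + a 1) * u 0 := by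
  obtain ⟨-, -, ho, -⟩ := hP
  obtain ⟨h0, h1, h2⟩ := h
  have e1 : P 1 = C 1 * X ^ 1 + C (-b 0) * X ^ 0 := by
    rw [h0] at h1
    simp only [C_neg, C_1]
    linear_combination -h1
  have e2 : P 2 = C 1 * X ^ 2 + (C (-b 0 - b 1) * X ^ 1 + C (b 0 * b 1 - a 1) * X ^ 0) := by
    have h3 := h2 1 le_rfl
    simp only [Nat.sub_self, h0, e1, Nat.reduceAdd] at h3
    simp only [C_neg, C_1, C_sub, C_mul] at h3 ⊢
    linear_combination -h3
  have o1 := ho 0 1 (by norm_num)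
  have o2 := ho 0 2 (by norm_num)
  rw [h0, one_mul, e1, aux_add, aux_mon, aux_mon] at o1
  rw [h0, one_mul, e2, aux_add, aux_add, aux_mon, aux_mon, aux_mon] at o2
  have k1 : u 1 = b 0 * u 0 := by linear_combination o1
  refine ⟨k1, ?_⟩
  linear_combination o2 + (b 0 + b 1) * k1

/-- `u` and `u⁻¹` cannot be simultaneously positive definite: if `u` is
positive definite (real `b_n`, positive `a_n`), then `a⁻_1 = -(b_0² + a_1) < 0`, so the
recurrence coefficients of `u⁻¹` are not all real with positive `a⁻_n`. -/
theorem stmt_8 (u : ℕ → ℂ) (P : ℕ → Polynomial ℂ) (hP : IsSMOP u P)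
    (a b : ℕ → ℂ) (hrec : HasTTRR P a b)
    (hbreal : ∀ n, ∃ r : ℝ, b n = r)
    (hapos : ∀ n, 1 ≤ n → ∃ r : ℝ, 0 < r ∧ a n = r)
    (uinv : ℕ → ℂ) (hinv : IsInverseMoments u uinv)
    (Pm : ℕ → Polynomial ℂ) (hPm : IsSMOP uinv Pm)
    (am bm : ℕ → ℂ) (hrecm : HasTTRR Pm am bm) :
    am 1 = -(b 0 ^ 2 + a 1) ∧
      ¬((∀ n, ∃ r : ℝ, bm n = r) ∧ (∀ n, 1 ≤ n → ∃ r : ℝ, 0 < r ∧ am n = r)) := by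
  obtain ⟨u1, u2⟩ := aux_moments u P hP a b hrec
  obtain ⟨w1, w2⟩ := aux_moments uinv Pm hPm am bm hrecm
  have i0 := hinv 0
  have i1 := hinv 1
  have i2 := hinv 2
  simp [Finset.sum_range_succ] at i0 i1 i2
  rw [u1, w1] at i1
  rw [u1, u2, w1, w2] at i2
  have hb : bm 0 = -b 0 := by
    linear_combination i1 - (bm 0 + b 0) * i0
  have key : am 1 = -(b 0 ^ 2 + a 1) := by
    rw [hb] at i2
    linear_combination i2 - (am 1 + b 0 ^ 2 + a 1) * i0
  refine ⟨key, ?_⟩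
  rintro ⟨-, hm⟩
  obtain ⟨r, hr, er⟩ := hm 1 le_rfl
  obtain ⟨s, hs, es⟩ := hapos 1 le_rfl
  obtain ⟨t, et⟩ := hbreal 0
  rw [er, es, et] at key
  have k : r = -(t ^ 2 + s) := by exact_mod_cast key
  nlinarith [sq_nonneg t]
end
end

section
/- Let u be quasi-definite with SMOP (P_n) and recurrence coefficients (a_n, b_n), let c ∈ ℂ, suppose ũ = (x−c)u is quasi-definite (so ũ_0 = u_1 − c·u_0 ≠ 0), and define R_n(x) = (u_0/ũ_0)·[(x−c)·P^{(1)}_n(x) − P_{n+1}(x)], where (P^{(1)}_n) are the associated polynomials of the first kind of u. Then (R_n)_{n≥0} is the co-recursive sequence of parameter α = −a_1·u_0/ũ_0 with respect to the associated functional u^{(1)}: R_0 = 1, R_1(x) = P^{(1)}_1(x) − α, and x·R_n = R_{n+1} + b_{n+1}·R_n + a_{n+1}·R_{n−1} for all n ≥ 1. -/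
open Polynomial

noncomputable section

/-- the polynomials `R_n(x) = (u_0/ũ_0)[(x-c)P^{(1)}_n(x) - P_{n+1}(x)]` form
the co-recursive sequence of parameter `α = -a_1 u_0/ũ_0` with respect to `u^{(1)}`. -/
theorem stmt_12 (u : ℕ → ℂ) (c : ℂ) (P : ℕ → Polynomial ℂ) (hP : IsSMOP u P)
    (a b : ℕ → ℂ) (hrec : HasTTRR P a b) (ha : ∀ n, 1 ≤ n → a n ≠ 0) (hu0 : u 0 ≠ 0)
    (P1 : ℕ → Polynomial ℂ)
    (hP1 : HasTTRR P1 (fun n => a (n + 1)) (fun n => b (n + 1)))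
    (ut : ℕ → ℂ) (hut : ∀ n, ut n = u (n + 1) - c * u n) (hut0 : ut 0 ≠ 0)
    (hutq : IsQuasiDefinite ut)
    (R : ℕ → Polynomial ℂ)
    (hR : ∀ n, R n = C (u 0 / ut 0) * ((X - C c) * P1 n - P (n + 1))) :
    R 0 = 1 ∧ R 1 = P1 1 - C (-(a 1) * u 0 / ut 0) ∧
      ∀ n, 1 ≤ n → X * R n = R (n + 1) + C (b (n + 1)) * R n + C (a (n + 1)) * R (n - 1) := by
  obtain ⟨h0, h1, h2⟩ := hrec
  obtain ⟨g0, g1, g2⟩ := hP1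
  have e1 : P 1 = X - C (b 0) := by
    rw [h0] at h1
    linear_combination -h1
  have e2 : P1 1 = X - C (b 1) := by
    rw [g0] at g1
    simp only [zero_add] at g1
    linear_combination -g1
  have e3 : P 2 = (X - C (b 1)) * (X - C (b 0)) - C (a 1) := by
    have := h2 1 le_rfl
    simp only [Nat.sub_self, h0, e1] at this
    linear_combination -this
  have hb : u 1 - b 0 * u 0 = 0 := by
    have h := hP.2.2.1 1 0 one_ne_zero
    rw [h0, e1, mul_one] at h
    rw [fapply, Polynomial.sum_over_range' _ (by simp) 2 (by simp)] at h
    simp [Finset.sum_range_succ, coeff_X, coeff_C] at h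
    linear_combination h
  have hk : u 0 / ut 0 * (b 0 - c) = 1 := by
    have := hut 0
    simp only [zero_add] at this
    field_simp
    linear_combination -hb - this
  have hK : C (u 0 / ut 0) * (C (b 0) - C c) = (1 : Polynomial ℂ) := by
    rw [← C_sub, ← C_mul, hk, C_1]
  refine ⟨?_, ?_, ?_⟩
  · rw [hR, g0, zero_add, e1]
    linear_combination hK
  · have hc : (C (-(a 1) * u 0 / ut 0) : Polynomial ℂ) = -(C (a 1) * C (u 0 / ut 0)) := by
      rw [← C_mul, ← C_neg]; congr 1; ring
    rw [hR, hc, e2, e3]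
    linear_combination (X - C (b 1)) * hK
  · intro n hn
    obtain ⟨m, rfl⟩ : ∃ m, n = m + 1 := ⟨n - 1, by omega⟩
    have p := h2 (m + 1 + 1) (by omega)
    have q := g2 (m + 1) (by omega)
    simp only [Nat.add_sub_cancel] at p q ⊢
    rw [hR, hR, hR]
    linear_combination C (u 0 / ut 0) * ((X - C c) * q - p)
end
end
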